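/- arXiv:math/0008154 — 2 statements merged into one kernel-verified Lean document; each statement's English description precedes it below -/
import Mathlib

section
/- Let g be a finite-dimensional semisimple Lie algebra over ℂ and let B be a symmetric invariant bilinear form on g. Suppose there exists an alternating bilinear ℂ-valued form h on g such that B([x,y],z) = h([x,y],z) − h([x,z],y) + h([y,z],x) for all x,y,z ∈ g (that is, the 3-cocycle c_B is a coboundary). Then B = 0. -/
/-!
For an invariant form `B` and an alternating form `h`, the identity `c_B = dh` says precisely that
`B + h`, seen as a linear map `L → L*`, is a 1-cocycle for the coadjoint representation. The Killing
form identifies `L*` with `L`, so this cocycle corresponds to a derivation of `L`, which is inner;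
hence `B x y + h x y = -φ ⁅x, y⁆` for some `φ ∈ L*`. This makes `B` alternating; as it is also
symmetric, it vanishes.
-/

open LinearMap (BilinForm)
open Module (Dual)

section InnerDerivation

variable {R L M N : Type*} [CommRing R] [LieRing L] [LieAlgebra R L]
  [AddCommGroup M] [Module R M] [LieRingModule L M] [LieModule R L M]
  [AddCommGroup N] [Module R N] [LieRingModule L N] [LieModule R L N]

/-- The derivation `f ∘ D : L → N` obtained by pushing forward a derivation `D : L → M` along a
homomorphism of Lie modules `f : M → N`. -/
def derivationPushforward (f : M →ₗ⁅R,L⁆ N) (D : LieDerivation R L M) : LieDerivation R L N where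
  toLinearMap := (f : M →ₗ[R] N) ∘ₗ (D : L →ₗ[R] M)
  leibniz' x y := by simp

theorem exists_inner_eq_of_lieModuleEquiv (e : M ≃ₗ⁅R,L⁆ N)
    (hM : ∀ D : LieDerivation R L M, ∃ m, LieDerivation.inner R L M m = D)
    (D : LieDerivation R L N) : ∃ n, LieDerivation.inner R L N n = D := by
  obtain ⟨m, hm⟩ := hM (derivationPushforward e.symm D)
  refine ⟨e m, LieDerivation.ext fun x ↦ ?_⟩
  have hx : ⁅x, m⁆ = e.symm (D x) := LieDerivation.congr_fun hm x
  calc ⁅x, e m⁆ = e ⁅x, m⁆ := (e.toLieModuleHom.map_lie x m).symm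
    _ = D x := by rw [hx, e.apply_symm_apply]

end InnerDerivation

section Killing

variable {K L M : Type*} [Field K] [LieRing L] [LieAlgebra K L]

/-- The isomorphism `y ↦ Φ y` from a finite-dimensional Lie module onto its dual, given by a
nondegenerate invariant bilinear form `Φ`. -/
noncomputable def lieModuleEquivDual [AddCommGroup M] [Module K M] [LieRingModule L M]
    [LieModule K L M] [FiniteDimensional K M] (Φ : BilinForm K M) (hΦ : Φ.Nondegenerate)
    (hinv : Φ.lieInvariant L) : M ≃ₗ⁅K,L⁆ Dual K M where
  __ := Φ.toDual hΦ
  map_lie' {x y} := LinearMap.ext (hinv x y)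

variable [FiniteDimensional K L] [LieAlgebra.IsKilling K L]

theorem exists_inner_eq_of_isKilling (D : LieDerivation K L L) :
    ∃ x, LieDerivation.inner K L L x = D := by
  obtain ⟨x, hx⟩ := LieDerivation.IsKilling.exists_eq_ad D
  refine ⟨-x, ?_⟩
  rw [map_neg, ← hx]
  rfl

theorem exists_inner_dual_eq_of_isKilling (D : LieDerivation K L (Dual K L)) :
    ∃ φ, LieDerivation.inner K L (Dual K L) φ = D :=
  exists_inner_eq_of_lieModuleEquiv
    (lieModuleEquivDual (killingForm K L) (LieAlgebra.IsKilling.killingForm_nondegenerate K L)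
      (LieModule.traceForm_lieInvariant K L L))
    exists_inner_eq_of_isKilling D

end Killing

section Coboundary

variable {R L : Type*} [CommRing R] [LieRing L] [LieAlgebra R L] {B h : BilinForm R L}

/-- If `c_B = dh`, then `B + h` is a derivation of `L` with values in its coadjoint module, i.e. a
1-cocycle. -/
def derivationOfCoboundary (hinv : B.lieInvariant L) (halt : h.IsAlt)
    (hcob : ∀ x y z, B ⁅x, y⁆ z = h ⁅x, y⁆ z - h ⁅x, z⁆ y + h ⁅y, z⁆ x) :
    LieDerivation R L (Dual R L) where
  toLinearMap := B + h
  leibniz' x y := by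
    ext z
    have hyx : B ⁅y, x⁆ z = -B ⁅x, y⁆ z := by
      rw [← lie_skew, map_neg, LinearMap.neg_apply]
    simp only [LinearMap.add_apply, LinearMap.sub_apply, Dual.lie_apply]
    linear_combination hyx + hinv x y z - hinv y x z - hcob x y z
      - halt.neg_eq ⁅x, z⁆ y + halt.neg_eq ⁅y, z⁆ x

theorem isAlt_of_add_eq_inner (halt : h.IsAlt) {φ : Dual R L}
    (hφ : ∀ x, B x + h x = LieDerivation.inner R L (Dual R L) φ x) : B.IsAlt := fun x ↦ by
  have hxx : B x x + h x x = -φ ⁅x, x⁆ := LinearMap.congr_fun (hφ x) x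
  simpa [halt.self_eq_zero x] using hxx

end Coboundary

theorem eq_zero_of_cB_coboundary_general {K L : Type*} [Field K] [NeZero (2 : K)] [LieRing L]
    [LieAlgebra K L] [FiniteDimensional K L] [LieAlgebra.IsKilling K L] {B : BilinForm K L}
    (hsymm : B.IsSymm) (hinv : B.lieInvariant L)
    (hcob : ∃ h : BilinForm K L, h.IsAlt ∧
      ∀ x y z, B ⁅x, y⁆ z = h ⁅x, y⁆ z - h ⁅x, z⁆ y + h ⁅y, z⁆ x) :
    B = 0 := by
  obtain ⟨h, halt, hd⟩ := hcob
  obtain ⟨φ, hφ⟩ := exists_inner_dual_eq_of_isKilling (derivationOfCoboundary hinv halt hd)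
  have hB : B.IsAlt := isAlt_of_add_eq_inner halt fun x ↦ (LieDerivation.congr_fun hφ x).symm
  exact BilinForm.ext_of_isSymm hsymm BilinForm.isSymm_zero hB

/-- Let `g` be a finite-dimensional semisimple complex Lie algebra and `B`
a symmetric invariant bilinear form on `g`.  If the 3-cocycle
`c_B (x, y, z) = B ⁅x, y⁆ z` is a coboundary, i.e. there is an alternating bilinear form `h`
with `B ⁅x, y⁆ z = h ⁅x, y⁆ z − h ⁅x, z⁆ y + h ⁅y, z⁆ x` for all `x y z`, then `B = 0`. -/
theorem eq_zero_of_cB_coboundary {g : Type*} [LieRing g] [LieAlgebra ℂ g]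
    [FiniteDimensional ℂ g] [LieAlgebra.IsSemisimple ℂ g]
    (B : LinearMap.BilinForm ℂ g)
    (hsymm : ∀ x y : g, B x y = B y x)
    (hinv : ∀ x y z : g, B ⁅z, x⁆ y + B x ⁅z, y⁆ = 0)
    (hcob : ∃ h : LinearMap.BilinForm ℂ g, (∀ x : g, h x x = 0) ∧
      ∀ x y z : g, B ⁅x, y⁆ z = h ⁅x, y⁆ z - h ⁅x, z⁆ y + h ⁅y, z⁆ x) :
    B = 0 := by
  have : LieAlgebra.IsKilling ℂ g :=
    (LieAlgebra.hasTrivialRadical_iff_isKilling ℂ g).mp inferInstance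
  exact eq_zero_of_cB_coboundary_general ⟨hsymm⟩
    (fun z x y ↦ eq_neg_of_add_eq_zero_left (hinv x y z)) hcob
end

section
/- Let g be a finite-dimensional semisimple Lie algebra over ℂ and let f be an alternating trilinear ℂ-valued form on g which is a 3-cocycle, i.e. for all x₁,x₂,x₃,x₄ ∈ g, f([x₁,x₂],x₃,x₄) − f([x₁,x₃],x₂,x₄) + f([x₁,x₄],x₂,x₃) + f([x₂,x₃],x₁,x₄) − f([x₂,x₄],x₁,x₃) + f([x₃,x₄],x₁,x₂) = 0. Then there exist a symmetric invariant bilinear form B on g and an alternating bilinear ℂ-valued form h on g such that f(x,y,z) = B([x,y],z) + h([x,y],z) − h([x,z],y) + h([y,z],x) for all x,y,z ∈ g. -/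
/-!
This is Whitehead's argument. Let `∑ bᵢ ⊗ cᵢ` be the Casimir element of a nondegenerate invariant
form on `L`. Applying it to the values of a 2-cocycle `σ` of `L` gives the coboundary of the
1-cochain `y ↦ ∑ ⁅bᵢ, σ(cᵢ, y)⁆`.

The Casimir element of the Killing form acts on the coadjoint module as the identity, so every
2-cocycle with values in the dual of `L` is a coboundary. An alternating 3-cocycle `f` is such a
2-cocycle, hence `f = dφ` for a bilinear form `φ`. Since `f` is alternating in its last two
arguments, the symmetric part of `φ` is invariant; it contributes `B([x, y], z)` to `dφ`, and the
antisymmetric part contributes the differential of an alternating form.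
-/

open Module LieModule.Cohomology

section DualBasis

variable {ι K V : Type*} [DecidableEq ι] [Field K] [AddCommGroup V] [Module K V]
  {Φ : LinearMap.BilinForm K V} (hΦ : Φ.Nondegenerate) (b : Basis ι K V)

theorem repr_eq_dualBasis_apply [Finite ι] (x : V) (i : ι) :
    b.repr x i = Φ (Φ.dualBasis hΦ b i) x := by
  rw [← LinearMap.BilinForm.flip_apply, ← LinearMap.BilinForm.dualBasis_repr_apply hΦ.flip,
    LinearMap.BilinForm.dualBasis_flip_dualBasis]

variable [Fintype ι]

theorem sum_apply_smul_dualBasis (x : V) : ∑ i, Φ x (b i) • Φ.dualBasis hΦ b i = x := by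
  simpa only [LinearMap.BilinForm.dualBasis_repr_apply] using (Φ.dualBasis hΦ b).sum_repr x

theorem sum_dualBasis_apply_smul (x : V) : ∑ i, Φ (Φ.dualBasis hΦ b i) x • b i = x := by
  simpa only [repr_eq_dualBasis_apply hΦ] using b.sum_repr x

theorem trace_eq_sum_dualBasis_apply (T : V →ₗ[K] V) :
    LinearMap.trace K V T = ∑ i, Φ (Φ.dualBasis hΦ b i) (T (b i)) := by
  simp only [LinearMap.trace_eq_matrix_trace K b, Matrix.trace, Matrix.diag_apply,
    LinearMap.toMatrix_apply, repr_eq_dualBasis_apply hΦ]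

end DualBasis

section Casimir

variable {ι K L M : Type*} [Fintype ι] [DecidableEq ι] [Field K] [LieRing L] [LieAlgebra K L]
  [AddCommGroup M] [Module K M] {Φ : LinearMap.BilinForm K L} (hΦ : Φ.Nondegenerate)
  (b : Basis ι K L)

theorem sum_apply_lie_dualBasis_eq_neg (hinv : Φ.lieInvariant L) (T : L →ₗ[K] L →ₗ[K] M) (x : L) :
    ∑ i, T ⁅x, b i⁆ (Φ.dualBasis hΦ b i) = -∑ i, T (b i) ⁅x, Φ.dualBasis hΦ b i⁆ := by
  set c := Φ.dualBasis hΦ b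
  have expand_b (i : ι) : T ⁅x, b i⁆ (c i) = ∑ j, Φ (c j) ⁅x, b i⁆ • T (b j) (c i) := by
    conv_lhs => rw [← sum_dualBasis_apply_smul hΦ b ⁅x, b i⁆]
    simp [c]
  have expand_c (j : ι) : T (b j) ⁅x, c j⁆ = ∑ i, Φ ⁅x, c j⁆ (b i) • T (b j) (c i) := by
    conv_lhs => rw [← sum_apply_smul_dualBasis hΦ b ⁅x, c j⁆]
    simp [c]
  simp only [expand_b, expand_c, hinv x, neg_smul, Finset.sum_neg_distrib, neg_neg]
  exact Finset.sum_comm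

variable [LieRingModule L M] [LieModule K L M]

/-- The action on a Lie module of the Casimir element attached to a nondegenerate form `Φ`; the
basis `b` serves only to write this element down. -/
noncomputable def casimirOperator : End K M :=
  ∑ i, LieModule.toEnd K L M (b i) * LieModule.toEnd K L M (Φ.dualBasis hΦ b i)

/-- The degree-two part of the homotopy between the Casimir operator and zero on the
Chevalley–Eilenberg complex, which yields primitives of 2-cocycles. -/
noncomputable def casimirHomotopy (σ : twoCochain K L M) : oneCochain K L M :=
  ∑ i, LieModule.toEnd K L M (b i) ∘ₗ σ.val (Φ.dualBasis hΦ b i)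

theorem casimirOperator_apply (m : M) :
    casimirOperator hΦ b m = ∑ i, ⁅b i, ⁅Φ.dualBasis hΦ b i, m⁆⁆ := by
  simp [casimirOperator]

theorem casimirHomotopy_apply (σ : twoCochain K L M) (y : L) :
    casimirHomotopy hΦ b σ y = ∑ i, ⁅b i, σ (Φ.dualBasis hΦ b i) y⁆ := by
  simp [casimirHomotopy]

theorem d₁₂_casimirHomotopy (hinv : Φ.lieInvariant L) {σ : twoCochain K L M}
    (hσ : σ ∈ twoCocycle K L M) (y z : L) :
    d₁₂ K L M (casimirHomotopy hΦ b σ) y z = casimirOperator hΦ b (σ y z) := by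
  set c := Φ.dualBasis hΦ b
  have casimir_invariant (y z : L) : ∑ i, ⁅⁅y, b i⁆, σ (c i) z⁆ = -∑ i, ⁅b i, σ ⁅y, c i⁆ z⁆ :=
    sum_apply_lie_dualBasis_eq_neg hΦ b hinv
      ((LieModule.toEnd K L M : L →ₗ[K] M →ₗ[K] M).compl₂ (σ.val.flip z)) y
  have cocycle (i : ι) : ⁅c i, σ y z⁆ = ⁅y, σ (c i) z⁆ - ⁅z, σ (c i) y⁆ - σ ⁅y, c i⁆ z
      + σ ⁅z, c i⁆ y - σ (c i) ⁅y, z⁆ := by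
    have h : d₂₃ K L M σ (c i) y z = 0 := by rw [(mem_twoCocycle_iff K L M σ).mp hσ]; rfl
    rw [d₂₃_apply, ← lie_skew (c i) y, ← lie_skew (c i) z, ← twoCochain_skew σ (c i)] at h
    simp only [map_neg, LinearMap.neg_apply] at h
    linear_combination (norm := abel) h
  simp only [d₁₂_apply_apply, casimirHomotopy_apply, casimirOperator_apply, lie_sum,
    leibniz_lie _ (b _), Finset.sum_add_distrib, cocycle, lie_add, lie_sub,
    Finset.sum_sub_distrib, c, casimir_invariant]
  abel

end Casimir

section Killing

variable {ι K L : Type*} [Fintype ι] [DecidableEq ι] [Field K] [LieRing L] [LieAlgebra K L]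

theorem sum_dualBasis_killingForm_lie_lie (hκ : (killingForm K L).Nondegenerate)
    (b : Basis ι K L) (w : L) :
    ∑ i, ⁅(killingForm K L).dualBasis hκ b i, ⁅b i, w⁆⁆ = w := by
  set c := (killingForm K L).dualBasis hκ b
  refine LinearMap.ker_eq_bot.mp hκ.ker_eq_bot (LinearMap.ext fun z ↦ ?_)
  calc killingForm K L (∑ i, ⁅c i, ⁅b i, w⁆⁆) z
      = ∑ i, killingForm K L (c i) ⁅z, ⁅w, b i⁆⁆ := by
        simp only [map_sum, LinearMap.sum_apply, LieModule.traceForm_apply_lie_apply]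
        simp only [← lie_skew z, ← lie_skew w, neg_lie, neg_neg]
    _ = killingForm K L z w := by
        rw [killingForm_apply_apply, trace_eq_sum_dualBasis_apply hκ b]
        rfl
    _ = killingForm K L w z := LieModule.traceForm_comm K L L z w

theorem casimirOperator_killingForm_dual (hκ : (killingForm K L).Nondegenerate)
    (b : Basis ι K L) (α : Dual K L) : casimirOperator hκ b α = α := by
  ext w
  simp [casimirOperator_apply, ← map_sum, sum_dualBasis_killingForm_lie_lie]

theorem exists_d₁₂_eq_of_mem_twoCocycle_dual [FiniteDimensional K L] [LieAlgebra.IsKilling K L]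
    {σ : twoCochain K L (Dual K L)} (hσ : σ ∈ twoCocycle K L (Dual K L)) :
    ∃ φ : oneCochain K L (Dual K L), ∀ x y, d₁₂ K L (Dual K L) φ x y = σ x y := by
  classical
  have hκ := LieAlgebra.IsKilling.killingForm_nondegenerate K L
  have hinv := LieModule.traceForm_lieInvariant K L L
  refine ⟨casimirHomotopy hκ (finBasis K L) σ, fun x y ↦ ?_⟩
  rw [d₁₂_casimirHomotopy hκ _ hinv hσ, casimirOperator_killingForm_dual]

end Killing

section Forms

variable {R L : Type*} [CommRing R] [LieRing L] [LieAlgebra R L]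

theorem mem_twoCocycle_dual {f : L →ₗ[R] L →ₗ[R] L →ₗ[R] R} (hf₁₂ : f.IsAlt)
    (hf₂₃ : ∀ x, (f x).IsAlt)
    (hf : ∀ x₁ x₂ x₃ x₄ : L,
      f ⁅x₁, x₂⁆ x₃ x₄ - f ⁅x₁, x₃⁆ x₂ x₄ + f ⁅x₁, x₄⁆ x₂ x₃
        + f ⁅x₂, x₃⁆ x₁ x₄ - f ⁅x₂, x₄⁆ x₁ x₃ + f ⁅x₃, x₄⁆ x₁ x₂ = 0) :
    (⟨f, hf₁₂⟩ : twoCochain R L (Dual R L)) ∈ twoCocycle R L (Dual R L) := by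
  have cyclic (x y z : L) : f x y z = f y z x := by
    rw [← (hf₂₃ y).neg, ← hf₁₂.neg, LinearMap.neg_apply]
  rw [mem_twoCocycle_iff]
  ext x y z w
  change -f y z ⁅x, w⁆ - -f x z ⁅y, w⁆ + -f x y ⁅z, w⁆ - f ⁅x, y⁆ z w + f ⁅x, z⁆ y w
    - f ⁅y, z⁆ x w = 0
  simp only [← cyclic ⁅_, w⁆]
  linear_combination -hf x y z w

theorem d₁₂_dual_apply (φ : LinearMap.BilinForm R L) (x y z : L) :
    d₁₂ R L (Dual R L) φ x y z = φ x ⁅y, z⁆ - φ y ⁅x, z⁆ - φ ⁅x, y⁆ z := by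
  simp
  ring

theorem lieInvariant_add_flip_of_d₁₂_isAlt {φ : LinearMap.BilinForm R L}
    (hφ : ∀ x y, d₁₂ R L (Dual R L) φ x y y = 0) : (φ + φ.flip).lieInvariant L := by
  intro x y z
  have diag (y : L) : φ y ⁅x, y⁆ + φ ⁅x, y⁆ y = 0 := by
    have h := hφ x y
    rw [d₁₂_dual_apply, lie_self, map_zero] at h
    linear_combination -h
  have polar := diag (y + z)
  simp only [lie_add, map_add, LinearMap.add_apply,
    LinearMap.BilinForm.flip_apply] at polar ⊢
  linear_combination polar - diag y - diag z

theorem d₁₂_dual_apply_of_lieInvariant {B : LinearMap.BilinForm R L} (hinv : B.lieInvariant L)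
    (x y z : L) : d₁₂ R L (Dual R L) B x y z = B ⁅x, y⁆ z := by
  have h₁ := hinv x y z
  have h₂ := hinv y x z
  rw [← lie_skew, map_neg, LinearMap.neg_apply] at h₂
  rw [d₁₂_dual_apply]
  linear_combination h₂ - h₁

theorem d₁₂_dual_apply_of_isAlt {h : LinearMap.BilinForm R L} (halt : h.IsAlt) (x y z : L) :
    d₁₂ R L (Dual R L) h x y z = -(h ⁅x, y⁆ z - h ⁅x, z⁆ y + h ⁅y, z⁆ x) := by
  rw [d₁₂_dual_apply]
  linear_combination halt.neg_eq y ⁅x, z⁆ - halt.neg_eq x ⁅y, z⁆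

theorem exists_eq_lieInvariant_sub_isAlt [Invertible (2 : R)] {φ : LinearMap.BilinForm R L}
    (hφ : ∀ x y, d₁₂ R L (Dual R L) φ x y y = 0) :
    ∃ B h : LinearMap.BilinForm R L,
      B.IsSymm ∧ B.lieInvariant L ∧ h.IsAlt ∧ φ = B - h := by
  refine ⟨(⅟2 : R) • (φ + φ.flip), (⅟2 : R) • (φ.flip - φ), ⟨fun x y ↦ ?_⟩, fun x y z ↦ ?_,
    fun x ↦ ?_, ?_⟩
  · simp [add_comm]
  · simpa only [LinearMap.smul_apply, smul_neg] using
      congrArg ((⅟2 : R) • ·) (lieInvariant_add_flip_of_d₁₂_isAlt hφ x y z)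
  · simp
  · ext x y
    simp only [LinearMap.sub_apply, LinearMap.smul_apply, LinearMap.add_apply,
      LinearMap.BilinForm.flip_apply, smul_eq_mul]
    linear_combination -φ x y * invOf_mul_self (2 : R)

end Forms

theorem cocycle_eq_cB_add_coboundary_general {K L : Type*} [Field K] [Invertible (2 : K)]
    [LieRing L] [LieAlgebra K L] [FiniteDimensional K L] [LieAlgebra.IsKilling K L]
    {f : L →ₗ[K] L →ₗ[K] L →ₗ[K] K} (hf₁₂ : f.IsAlt) (hf₂₃ : ∀ x, (f x).IsAlt)
    (hf : ∀ x₁ x₂ x₃ x₄ : L,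
      f ⁅x₁, x₂⁆ x₃ x₄ - f ⁅x₁, x₃⁆ x₂ x₄ + f ⁅x₁, x₄⁆ x₂ x₃
        + f ⁅x₂, x₃⁆ x₁ x₄ - f ⁅x₂, x₄⁆ x₁ x₃ + f ⁅x₃, x₄⁆ x₁ x₂ = 0) :
    ∃ B h : LinearMap.BilinForm K L,
      B.IsSymm ∧ B.lieInvariant L ∧ h.IsAlt ∧
      ∀ x y z : L, f x y z = B ⁅x, y⁆ z + (h ⁅x, y⁆ z - h ⁅x, z⁆ y + h ⁅y, z⁆ x) := by
  obtain ⟨φ, hφ⟩ := exists_d₁₂_eq_of_mem_twoCocycle_dual (mem_twoCocycle_dual hf₁₂ hf₂₃ hf)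
  replace hφ (x y : L) : d₁₂ K L (Dual K L) φ x y = f x y := hφ x y
  obtain ⟨B, h, hsymm, hinv, halt, rfl⟩ :=
    exists_eq_lieInvariant_sub_isAlt (φ := φ) fun x y ↦ by rw [hφ, hf₂₃ x y]
  refine ⟨B, h, hsymm, hinv, halt, fun x y z ↦ ?_⟩
  calc f x y z = d₁₂ K L (Dual K L) B x y z - d₁₂ K L (Dual K L) h x y z := by
        simp only [← hφ, d₁₂_dual_apply, LinearMap.sub_apply]
        ring
    _ = B ⁅x, y⁆ z + (h ⁅x, y⁆ z - h ⁅x, z⁆ y + h ⁅y, z⁆ x) := by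
        rw [d₁₂_dual_apply_of_lieInvariant hinv, d₁₂_dual_apply_of_isAlt halt, sub_neg_eq_add]

/-- On a finite-dimensional semisimple complex Lie algebra, every alternating
trilinear 3-cocycle `f` is the sum of `c_B` for some symmetric invariant bilinear form `B` and
of the Chevalley differential of an alternating bilinear form `h`. -/
theorem cocycle_eq_cB_add_coboundary {g : Type*} [LieRing g] [LieAlgebra ℂ g]
    [FiniteDimensional ℂ g] [LieAlgebra.IsSemisimple ℂ g]
    (f : g →ₗ[ℂ] g →ₗ[ℂ] g →ₗ[ℂ] ℂ)
    (falt₁ : ∀ x z : g, f x x z = 0)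
    (falt₂ : ∀ x y : g, f x y x = 0)
    (falt₃ : ∀ x y : g, f x y y = 0)
    (fcoc : ∀ x₁ x₂ x₃ x₄ : g,
      f ⁅x₁, x₂⁆ x₃ x₄ - f ⁅x₁, x₃⁆ x₂ x₄ + f ⁅x₁, x₄⁆ x₂ x₃
        + f ⁅x₂, x₃⁆ x₁ x₄ - f ⁅x₂, x₄⁆ x₁ x₃ + f ⁅x₃, x₄⁆ x₁ x₂ = 0) :
    ∃ (B : LinearMap.BilinForm ℂ g) (h : LinearMap.BilinForm ℂ g),
      (∀ x y : g, B x y = B y x) ∧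
      (∀ x y z : g, B ⁅z, x⁆ y + B x ⁅z, y⁆ = 0) ∧
      (∀ x : g, h x x = 0) ∧
      (∀ x y z : g, f x y z
        = B ⁅x, y⁆ z + (h ⁅x, y⁆ z - h ⁅x, z⁆ y + h ⁅y, z⁆ x)) := by
  obtain ⟨B, h, hsymm, hinv, halt, hf⟩ :=
    cocycle_eq_cB_add_coboundary_general (fun x ↦ LinearMap.ext (falt₁ x)) falt₃ fcoc
  exact ⟨B, h, hsymm.eq, fun x y z ↦ eq_neg_iff_add_eq_zero.mp (hinv z x y), halt, hf⟩
end
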